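/- Let p be a prime, N ≥ 1, let 𝔩(ξ) ∈ ℤ_p[ξ_1,…,ξ_N] be an elliptic polynomial of degree d, and let α > 0, β > 0, m > 0 be real numbers. Then there exist positive constants C_0(α,β,m) and C_1(α,β,m) such that C_0(α,β,m)·[ξ]_p^{αβd} ≤ (|𝔩(ξ)|_p^{α} + m²)^{β} ≤ C_1(α,β,m)·[ξ]_p^{αβd} for all ξ ∈ ℚ_p^N, where [ξ]_p := max(1, ‖ξ‖_p). -/

import Mathlib

open MvPolynomial

/-!
Write `[x] = max 1 ‖x‖`, and compare functions up to positive constant factors, on the whole space.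
A homogeneous polynomial is `O(‖ξ‖ ^ d)`, one monomial at a time. If it vanishes at most at the
origin, then compactness of the unit sphere bounds it from below there, and rescaling by a
coordinate of maximal norm gives `c ‖ξ‖ ^ d ≤ ‖L ξ‖` for all `ξ ≠ 0`. Hence `[L ξ]` is comparable
to `[ξ] ^ d`. Since `‖y‖ ^ α + m ^ 2` is comparable to `[y] ^ α`, taking `β`-th powers concludes.
-/

open Asymptotics Filter

section Comparison

variable {X E F : Type*} [SeminormedAddCommGroup E] [SeminormedAddCommGroup F] {l : Filter X}

lemma isBigO_max_one_norm_left {f : X → E} {g : X → F}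
    (hone : (fun _ => (1 : ℝ)) =O[l] g) (hf : f =O[l] g) :
    (fun x => max 1 ‖f x‖) =O[l] g := by
  simpa only [Prod.norm_mk, norm_one] using (hone.prod_left hf).norm_left

lemma isBigO_one_max_one (g : X → ℝ) : (fun _ => (1 : ℝ)) =O[l] fun x => max 1 (g x) :=
  .of_norm_le fun x => norm_one.trans_le (le_max_left 1 (g x))

lemma isTheta_norm_rpow_add_const (f : X → E) {α μ : ℝ} (hα : 0 ≤ α) (hμ : 0 < μ) :
    (fun x => ‖f x‖ ^ α + μ) =Θ[l] fun x => (max 1 ‖f x‖) ^ α := by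
  constructor
  · have rpow_le : (fun x => ‖f x‖ ^ α) =O[l] fun x => (max 1 ‖f x‖) ^ α :=
      .of_norm_le fun x => by
        rw [Real.norm_of_nonneg (by positivity)]
        gcongr
        exact le_max_right _ _
    have const_le : (fun _ => μ) =O[l] fun x => (max 1 ‖f x‖) ^ α :=
      .of_bound μ <| .of_forall fun x => by
        rw [Real.norm_of_nonneg hμ.le, Real.norm_of_nonneg (by positivity)]
        exact le_mul_of_one_le_right hμ.le (Real.one_le_rpow (le_max_left _ _) hα)
    exact rpow_le.add const_le
  · have one_le : (fun _ => (1 : ℝ)) =O[l] fun x => ‖f x‖ ^ α + μ :=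
      .of_bound μ⁻¹ <| .of_forall fun x => by
        rw [norm_one, Real.norm_of_nonneg (by positivity), mul_add, inv_mul_cancel₀ hμ.ne']
        exact le_add_of_nonneg_left (by positivity)
    have rpow_le : (fun x => ‖f x‖ ^ α) =O[l] fun x => ‖f x‖ ^ α + μ :=
      .of_norm_le fun x => by
        rw [Real.norm_of_nonneg (by positivity)]
        exact le_add_of_nonneg_right hμ.le
    have max_rpow (x : X) : (max 1 ‖f x‖) ^ α = max 1 ‖‖f x‖ ^ α‖ := by
      rw [(Real.monotoneOn_rpow_Ici_of_exponent_nonneg hα).map_max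
        (Set.mem_Ici.2 zero_le_one) (Set.mem_Ici.2 (norm_nonneg _)), Real.one_rpow,
        Real.norm_of_nonneg (by positivity)]
    simpa only [max_rpow] using isBigO_max_one_norm_left one_le rpow_le

lemma exists_pos_bounds_of_isTheta_top {f g : X → ℝ} (hf : 0 ≤ f) (hg : 0 ≤ g) (h : f =Θ[⊤] g) :
    ∃ C₀ C₁ : ℝ, 0 < C₀ ∧ 0 < C₁ ∧ ∀ x, C₀ * g x ≤ f x ∧ f x ≤ C₁ * g x := by
  obtain ⟨C₁, hC₁, upper⟩ := h.1.exists_pos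
  obtain ⟨C₀, hC₀, lower⟩ := h.2.exists_pos
  refine ⟨C₀⁻¹, C₁, inv_pos.2 hC₀, hC₁, fun x => ⟨?_, ?_⟩⟩
  · rw [inv_mul_le_iff₀ hC₀]
    simpa only [Real.norm_of_nonneg (hf x), Real.norm_of_nonneg (hg x)] using
      isBigOWith_top.1 lower x
  · simpa only [Real.norm_of_nonneg (hf x), Real.norm_of_nonneg (hg x)] using
      isBigOWith_top.1 upper x

end Comparison

lemma exists_norm_apply_eq_norm {ι E : Type*} [Fintype ι] [Nonempty ι] [SeminormedAddCommGroup E]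
    (x : ι → E) : ∃ i, ‖x i‖ = ‖x‖ := by
  obtain ⟨i, hi⟩ := Finite.exists_max fun i => ‖x i‖
  exact ⟨i, (norm_le_pi_norm x i).antisymm ((pi_norm_le_iff_of_nonneg (norm_nonneg _)).2 hi)⟩

lemma eval_smul_of_isHomogeneous {ι R : Type*} [CommSemiring R] {L : MvPolynomial ι R} {d : ℕ}
    (hL : L.IsHomogeneous d) (a : R) (x : ι → R) : eval (a • x) L = a ^ d * eval x L := by
  rw [eval_eq, eval_eq, Finset.mul_sum]
  refine Finset.sum_congr rfl fun e he => ?_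
  simp only [Pi.smul_apply, smul_eq_mul, mul_pow, Finset.prod_mul_distrib,
    Finset.prod_pow_eq_pow_sum, ← hL.degree_eq_sum_deg_support he]
  ring

section Elliptic

variable {ι 𝕜 : Type*} [Fintype ι] [NormedField 𝕜] {L : MvPolynomial ι 𝕜} {d : ℕ}

lemma isBigO_eval_norm_pow (hL : L.IsHomogeneous d) (l : Filter (ι → 𝕜)) :
    (fun ξ => eval ξ L) =O[l] fun ξ => ‖ξ‖ ^ d := by
  simp only [eval_eq]
  refine .fun_sum fun e he => .const_mul_left ?_ _
  simp only [hL.degree_eq_sum_deg_support he, ← Finset.prod_pow_eq_pow_sum]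
  refine .finsetProd fun i _ => .pow (.of_norm_le fun ξ => ?_) _
  exact norm_le_pi_norm ξ i

variable [ProperSpace 𝕜]

lemma exists_pos_mul_norm_pow_le_norm_eval (hL : L.IsHomogeneous d)
    (hzero : ∀ ξ, eval ξ L = 0 → ξ = 0) :
    ∃ c > 0, ∀ ξ ≠ 0, c * ‖ξ‖ ^ d ≤ ‖eval ξ L‖ := by
  obtain ⟨c, hc, le_on_sphere⟩ : ∃ c > 0, ∀ ζ ∈ Metric.sphere (0 : ι → 𝕜) 1, c ≤ ‖eval ζ L‖ :=
    (isCompact_sphere _ _).exists_forall_le' L.continuous_eval.norm.continuousOn fun ζ hζ =>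
      norm_pos_iff.2 fun h => ne_zero_of_mem_unit_sphere ⟨ζ, hζ⟩ (hzero ζ h)
  refine ⟨c, hc, fun ξ hξ => ?_⟩
  obtain ⟨j, -⟩ := Function.ne_iff.1 hξ
  have : Nonempty ι := ⟨j⟩
  obtain ⟨i, hi⟩ := exists_norm_apply_eq_norm ξ
  have hi_ne : ξ i ≠ 0 := by rwa [← norm_ne_zero_iff, hi, norm_ne_zero_iff]
  have rescaled_mem : (ξ i)⁻¹ • ξ ∈ Metric.sphere (0 : ι → 𝕜) 1 := by
    rw [mem_sphere_zero_iff_norm, norm_smul, norm_inv, hi, inv_mul_cancel₀ (norm_ne_zero_iff.2 hξ)]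
  calc
    c * ‖ξ‖ ^ d ≤ ‖eval ((ξ i)⁻¹ • ξ) L‖ * ‖ξ‖ ^ d := by
      gcongr
      exact le_on_sphere _ rescaled_mem
    _ = ‖eval (ξ i • (ξ i)⁻¹ • ξ) L‖ := by
      rw [eval_smul_of_isHomogeneous hL (ξ i), norm_mul, norm_pow, hi, mul_comm]
    _ = ‖eval ξ L‖ := by rw [smul_inv_smul₀ hi_ne]

lemma isBigO_norm_pow_max_one_norm_eval (hL : L.IsHomogeneous d)
    (hzero : ∀ ξ, eval ξ L = 0 → ξ = 0) :
    (fun ξ : ι → 𝕜 => ‖ξ‖ ^ d) =O[⊤] fun ξ => max 1 ‖eval ξ L‖ := by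
  obtain ⟨c, hc, lower⟩ := exists_pos_mul_norm_pow_le_norm_eval hL hzero
  refine .of_bound (max 1 c⁻¹) <| .of_forall fun ξ => ?_
  rw [norm_pow, norm_norm, Real.norm_of_nonneg (by positivity)]
  rcases eq_or_ne ξ 0 with rfl | hξ
  · calc
      ‖(0 : ι → 𝕜)‖ ^ d ≤ 1 := pow_le_one₀ (norm_nonneg _) (norm_zero.trans_le zero_le_one)
      _ ≤ max 1 c⁻¹ * max 1 ‖eval 0 L‖ :=
        one_le_mul_of_one_le_of_one_le (le_max_left _ _) (le_max_left _ _)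
  · calc
      ‖ξ‖ ^ d ≤ c⁻¹ * ‖eval ξ L‖ := (le_inv_mul_iff₀ hc).2 (lower ξ hξ)
      _ ≤ max 1 c⁻¹ * max 1 ‖eval ξ L‖ := by
        gcongr <;> exact le_max_right _ _

lemma isTheta_max_one_norm_eval (hL : L.IsHomogeneous d) (hzero : ∀ ξ, eval ξ L = 0 → ξ = 0) :
    (fun ξ => max 1 ‖eval ξ L‖) =Θ[⊤] fun ξ => (max 1 ‖ξ‖) ^ d := by
  have max_pow (ξ : ι → 𝕜) : (max 1 ‖ξ‖) ^ d = max 1 ‖‖ξ‖ ^ d‖ := by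
    rw [(pow_left_monotoneOn (n := d)).map_max zero_le_one (norm_nonneg ξ), one_pow, norm_pow,
      norm_norm]
  simp only [max_pow]
  constructor
  · refine isBigO_max_one_norm_left (isBigO_one_max_one _) ((isBigO_eval_norm_pow hL ⊤).trans ?_)
    exact .of_norm_le fun ξ => le_max_right _ _
  · exact isBigO_max_one_norm_left (isBigO_one_max_one _)
      (isBigO_norm_pow_max_one_norm_eval hL hzero)

theorem elliptic_symbol_rpow_bounds_general (hL : L.IsHomogeneous d)
    (hzero : ∀ ξ, eval ξ L = 0 → ξ = 0) {α m : ℝ} (hα : 0 ≤ α) (β : ℝ) (hm : m ≠ 0) :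
    ∃ C₀ C₁ : ℝ, 0 < C₀ ∧ 0 < C₁ ∧ ∀ ξ : ι → 𝕜,
      C₀ * (max 1 ‖ξ‖) ^ (α * β * (d : ℝ)) ≤ (‖eval ξ L‖ ^ α + m ^ 2) ^ β ∧
        (‖eval ξ L‖ ^ α + m ^ 2) ^ β ≤ C₁ * (max 1 ‖ξ‖) ^ (α * β * (d : ℝ)) := by
  refine exists_pos_bounds_of_isTheta_top (fun ξ => by positivity) (fun ξ => by positivity) ?_
  have base_isTheta : (fun ξ => ‖eval ξ L‖ ^ α + m ^ 2) =Θ[⊤] fun ξ => ((max 1 ‖ξ‖) ^ d) ^ α :=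
    (isTheta_norm_rpow_add_const _ hα (by positivity)).trans <|
      (isTheta_max_one_norm_eval hL hzero).rpow
        (.of_forall fun ξ => by positivity) (.of_forall fun ξ => by positivity)
  have rpow_rpow (ξ : ι → 𝕜) :
      (((max 1 ‖ξ‖) ^ d) ^ α) ^ β = (max 1 ‖ξ‖) ^ (α * β * (d : ℝ)) := by
    rw [← Real.rpow_natCast, ← Real.rpow_mul (by positivity), ← Real.rpow_mul (by positivity)]
    ring_nf
  simpa only [rpow_rpow] using base_isTheta.rpow (r := β)
    (.of_forall fun ξ => by positivity) (.of_forall fun ξ => by positivity)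

end Elliptic

/-- For an elliptic polynomial `L` of degree `d` and reals `α, β, m > 0`,
there exist positive constants `C₀(α,β,m)`, `C₁(α,β,m)` such that
`C₀ [ξ]_p^{αβd} ≤ (|L(ξ)|_p^α + m²)^β ≤ C₁ [ξ]_p^{αβd}` for all `ξ ∈ ℚ_p^N`,
where `[ξ]_p = max(1, ‖ξ‖_p)`. -/
theorem elliptic_symbol_rpow_bounds
    (p : ℕ) [Fact p.Prime] (N : ℕ) (hN : 1 ≤ N)
    (d : ℕ) (hd : 1 ≤ d) (L : MvPolynomial (Fin N) ℤ_[p])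
    (hhom : L.IsHomogeneous d)
    (hell : ∀ ξ : Fin N → ℚ_[p], eval₂ PadicInt.Coe.ringHom ξ L = 0 ↔ ξ = 0)
    (α β m : ℝ) (hα : 0 < α) (hβ : 0 < β) (hm : 0 < m) :
    ∃ C₀ C₁ : ℝ, 0 < C₀ ∧ 0 < C₁ ∧
      ∀ ξ : Fin N → ℚ_[p],
        C₀ * (max 1 ‖ξ‖) ^ (α * β * (d : ℝ)) ≤
            (‖eval₂ PadicInt.Coe.ringHom ξ L‖ ^ α + m ^ 2) ^ β ∧
        (‖eval₂ PadicInt.Coe.ringHom ξ L‖ ^ α + m ^ 2) ^ β ≤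
            C₁ * (max 1 ‖ξ‖) ^ (α * β * (d : ℝ)) := by
  simp only [← eval_map] at hell ⊢
  exact elliptic_symbol_rpow_bounds_general (hhom.map _) (fun ξ => (hell ξ).1) hα.le β hm.ne'
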